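/- ζ(3) = (1/28) ∑_{n=1}^∞ (−1)^{n−1} (10n² − 6n + 1) · 256^n / (n^5 · C(2n, n)^5). -/

import Mathlib

/-!
Write `B = n! / (x)_{n+1}`, where `(x)_{n+1} = x (x + 1) ⋯ (x + n)`. The functions
`F(n, x) = (2x + n) (-1)ⁿ B⁴ / C(2n, n)` and
`G(n, x) = ((x + n)² + (x + 2n + 1)²) (-1)ⁿ B⁴ / (2 (2n + 1) C(2n, n))` satisfy
`F(n, x) - F(n + 1, x) = G(n, x) - G(n, x + 1)`. Summing over the shifts `x, x + 1, x + 2, …`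
and then over `n`, both sides telescope, and `F(0, x) = 2 / x³` gives
`∑ₙ G(n, x) = 2 ∑ₖ 1 / (x + k)³` for all `x > 0`. At `x = 1/2` the right-hand side is `14 ζ(3)`
and `G(n, 1/2)` is half the term of index `n + 1` of the central binomial series. (At `x = 1`
one finds Apéry's series `ζ(3) = (5/2) ∑ (-1)ⁿ⁻¹ / (n³ C(2n, n))` instead.)
-/

open Filter Topology
open scoped Nat

section Telescoping

variable {E : Type*} [AddCommGroup E]

lemma tsum_sub_succ_of_tendsto_zero [TopologicalSpace E] [IsTopologicalAddGroup E] [T2Space E]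
    {f : ℕ → E} (hs : Summable fun k => f k - f (k + 1)) (hf : Tendsto f atTop (𝓝 0)) :
    ∑' k, (f k - f (k + 1)) = f 0 := by
  refine tendsto_nhds_unique hs.hasSum.tendsto_sum_nat ?_
  simpa only [Finset.sum_range_sub', sub_zero] using hf.const_sub (f 0)

theorem hasSum_of_wilfZeilberger [UniformSpace E] [IsUniformAddGroup E] [CompleteSpace E]
    [T2Space E] {F G : ℕ → ℕ → E}
    (hFG : ∀ n k, F n k - F (n + 1) k = G n k - G n (k + 1))
    (hF : Summable (Function.uncurry F)) (hG : ∀ n, Tendsto (G n) atTop (𝓝 0)) :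
    HasSum (fun n => G n 0) (∑' k, F 0 k) := by
  have hrow (n : ℕ) : Summable (F n) := hF.prod_factor n
  have hS : Summable fun n => ∑' k, F n k := hF.prod
  have hG0 (n : ℕ) : G n 0 = ∑' k, F n k - ∑' k, F (n + 1) k := by
    have hsub := (hrow n).sub (hrow (n + 1))
    rw [← (hrow n).tsum_sub (hrow (n + 1))]
    simp only [hFG] at hsub ⊢
    exact (tsum_sub_succ_of_tendsto_zero hsub (hG n)).symm
  have hsub := hS.sub ((summable_nat_add_iff 1).2 hS)
  simp only [hG0]
  rw [← tsum_sub_succ_of_tendsto_zero hsub hS.tendsto_atTop_zero]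
  exact hsub.hasSum

end Telescoping

section CentralBinom

lemma two_pow_le_centralBinom (n : ℕ) : 2 ^ n ≤ Nat.centralBinom n := by
  induction n with
  | zero => simp
  | succ n ih =>
    refine Nat.le_of_mul_le_mul_left ?_ n.succ_pos
    calc (n + 1) * 2 ^ (n + 1) = 2 * (n + 1) * 2 ^ n := by ring
      _ ≤ 2 * (2 * n + 1) * Nat.centralBinom n := by gcongr; omega
      _ = (n + 1) * Nat.centralBinom (n + 1) := (Nat.succ_mul_centralBinom_succ n).symm

lemma cast_succ_mul_centralBinom_succ (R : Type*) [Semiring R] (n : ℕ) :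
    ((n : R) + 1) * Nat.centralBinom (n + 1) = 2 * (2 * n + 1) * Nat.centralBinom n := by
  exact_mod_cast congrArg (Nat.cast (R := R)) (Nat.succ_mul_centralBinom_succ n)

end CentralBinom

section Pochhammer

lemma mul_ascPochhammer_eval_add_one {R : Type*} [CommSemiring R] (n : ℕ) (x : R) :
    x * (ascPochhammer R n).eval (x + 1) = (ascPochhammer R n).eval x * (x + n) := by
  rw [← ascPochhammer_succ_eval, ascPochhammer_succ_left]
  simp

lemma factorial_mul_le_ascPochhammer_eval {R : Type*} [CommSemiring R] [PartialOrder R]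
    [IsOrderedRing R] {x : R} (hx : 0 ≤ x) (n : ℕ) :
    n ! * x ≤ (ascPochhammer R (n + 1)).eval x := by
  induction n with
  | zero => simp
  | succ n ih =>
    have hprev : 0 ≤ (ascPochhammer R (n + 1)).eval x := le_trans (by positivity) ih
    calc ((n + 1)! : R) * x = n ! * x * (n + 1 : ℕ) := by
          rw [Nat.factorial_succ]; push_cast; ring
      _ ≤ (ascPochhammer R (n + 1)).eval x * (x + (n + 1 : ℕ)) :=
        mul_le_mul ih (le_add_of_nonneg_left hx) (Nat.cast_nonneg _) hprev
      _ = (ascPochhammer R (n + 1 + 1)).eval x := (ascPochhammer_succ_eval _ _).symm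

lemma four_pow_mul_ascPochhammer_eval_half {K : Type*} [Field K] [NeZero (2 : K)] (n : ℕ) :
    4 ^ n * (ascPochhammer K n).eval (1 / 2) = Nat.centralBinom n * n ! := by
  induction n with
  | zero => simp
  | succ n ih =>
    calc 4 ^ (n + 1) * (ascPochhammer K (n + 1)).eval (1 / 2)
        = 4 ^ n * (ascPochhammer K n).eval (1 / 2) * (2 * (2 * n + 1)) := by
          rw [ascPochhammer_succ_eval]; field_simp; ring
      _ = 2 * (2 * n + 1) * Nat.centralBinom n * n ! := by rw [ih]; ring
      _ = Nat.centralBinom (n + 1) * (n + 1)! := by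
          rw [← cast_succ_mul_centralBinom_succ, Nat.factorial_succ]; push_cast; ring

lemma factorial_div_ascPochhammer_eval_half {K : Type*} [Field K] [CharZero K] (n : ℕ) :
    (n ! : K) / (ascPochhammer K (n + 1)).eval (1 / 2) =
      4 ^ (n + 1) / ((n + 1) * Nat.centralBinom (n + 1)) := by
  have hfac : (n ! : K) ≠ 0 := Nat.cast_ne_zero.2 n.factorial_ne_zero
  have hpoch : (ascPochhammer K (n + 1)).eval (1 / 2) =
      Nat.centralBinom (n + 1) * ((n + 1) * n !) / 4 ^ (n + 1) := by
    rw [eq_div_iff (by norm_num), mul_comm, four_pow_mul_ascPochhammer_eval_half,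
      Nat.factorial_succ]
    push_cast
    rfl
  rw [hpoch]
  field_simp

end Pochhammer

section ShiftedPSeries

lemma summable_one_div_add_nat_pow {x : ℝ} (hx : 0 ≤ x) {p : ℕ} (hp : 1 < p) :
    Summable fun k : ℕ => 1 / (x + k) ^ p := by
  refine ((Real.summable_one_div_nat_add_rpow x p).2 (by exact_mod_cast hp)).congr fun k => ?_
  rw [abs_of_nonneg (by positivity), Real.rpow_natCast, add_comm]

lemma tsum_one_div_half_add_nat_pow {p : ℕ} (hp : 1 < p) :
    ∑' k : ℕ, 1 / (1 / 2 + (k : ℝ)) ^ p = (2 ^ p - 1) * ∑' k : ℕ, 1 / ((k : ℝ) + 1) ^ p := by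
  let f : ℕ → ℝ := fun k => 1 / ((k : ℝ) + 1) ^ p
  have heven (k : ℕ) : f (2 * k) = 1 / 2 ^ p * (1 / (1 / 2 + (k : ℝ)) ^ p) := by
    simp only [f]
    rw [one_div_mul_one_div, ← mul_pow]
    push_cast
    ring
  have hodd (k : ℕ) : f (2 * k + 1) = 1 / 2 ^ p * f k := by
    simp only [f]
    rw [one_div_mul_one_div, ← mul_pow]
    push_cast
    ring
  have hf : Summable f := by
    simpa only [f, add_comm] using summable_one_div_add_nat_pow zero_le_one hp
  have hhalf := summable_one_div_add_nat_pow (x := 1 / 2) (by norm_num) hp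
  have hsplit := tsum_even_add_odd (f := f)
    (by simpa only [heven] using hhalf.mul_left _) (by simpa only [hodd] using hf.mul_left _)
  simp only [heven, hodd, tsum_mul_left] at hsplit
  rw [← mul_add, one_div_mul_eq_div, div_eq_iff (by positivity)] at hsplit
  linear_combination hsplit

end ShiftedPSeries

section WilfZeilbergerPair

variable {K : Type*} [Field K]

/-- The common factor `(-1)ⁿ B⁴ / C(2n, n)` of the Wilf–Zeilberger pair, where
`B = n! / (x)_{n+1}`; for real `x > 0` this is the Beta value `Β(x, n + 1)`. -/
noncomputable def wzKernel (n : ℕ) (x : K) : K :=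
  (-1) ^ n / Nat.centralBinom n * (n ! / (ascPochhammer K (n + 1)).eval x) ^ 4

/-- The member `F(n, x)` of the Wilf–Zeilberger pair. The second discrete variable `k` of the
usual formulation enters through the shifts `x + k`. -/
noncomputable def wzSummand (n : ℕ) (x : K) : K :=
  (2 * x + n) * wzKernel n x

/-- The member `G(n, x)` of the Wilf–Zeilberger pair, whose differences in `x` are those of
`wzSummand` in `n`. -/
noncomputable def wzMate (n : ℕ) (x : K) : K :=
  ((x + n) ^ 2 + (x + 2 * n + 1) ^ 2) / (2 * (2 * n + 1)) * wzKernel n x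

lemma wzKernel_succ [CharZero K] (n : ℕ) (x : K) :
    wzKernel (n + 1) x =
      -((n + 1) ^ 5 / (2 * (2 * n + 1) * (x + n + 1) ^ 4)) * wzKernel n x := by
  have hn : (n : K) + 1 ≠ 0 := Nat.cast_add_one_ne_zero n
  have hC_succ : (Nat.centralBinom (n + 1) : K) =
      2 * (2 * n + 1) * Nat.centralBinom n / (n + 1) := by
    rw [← cast_succ_mul_centralBinom_succ, mul_div_cancel_left₀ _ hn]
  rw [wzKernel, wzKernel, ascPochhammer_succ_eval, hC_succ, Nat.factorial_succ]
  push_cast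
  rw [← add_assoc]
  field_simp
  ring

lemma wzKernel_add_one (n : ℕ) {x : K} (hx : x ≠ 0) :
    wzKernel n (x + 1) = (x / (x + n + 1)) ^ 4 * wzKernel n x := by
  have hshift : (ascPochhammer K (n + 1)).eval (x + 1) =
      (ascPochhammer K (n + 1)).eval x * (x + n + 1) / x := by
    rw [eq_div_iff hx, mul_comm, mul_ascPochhammer_eval_add_one]
    push_cast
    ring
  rw [wzKernel, wzKernel, hshift]
  field_simp

theorem wzSummand_sub_wzSummand_succ [CharZero K] (n : ℕ) {x : K} (hx : x ≠ 0)
    (hxn : x + n + 1 ≠ 0) :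
    wzSummand n x - wzSummand (n + 1) x = wzMate n x - wzMate n (x + 1) := by
  have h2n : 2 * (n : K) + 1 ≠ 0 := by exact_mod_cast (2 * n).succ_ne_zero
  rw [wzSummand, wzSummand, wzMate, wzMate, wzKernel_succ, wzKernel_add_one n hx]
  push_cast
  field_simp
  ring

lemma wzSummand_zero {x : K} (hx : x ≠ 0) : wzSummand 0 x = 2 * (1 / x ^ 3) := by
  simp only [wzSummand, wzKernel, zero_add, ascPochhammer_one, Polynomial.eval_X, pow_zero,
    Nat.centralBinom_zero, Nat.factorial_zero, Nat.cast_zero, Nat.cast_one]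
  field_simp
  ring

lemma wzMate_half [CharZero K] (n : ℕ) :
    wzMate n (1 / 2 : K) =
      1 / 2 * ((-1) ^ n * (10 * ((n : K) + 1) ^ 2 - 6 * (n + 1) + 1) * 256 ^ (n + 1) /
        (((n : K) + 1) ^ 5 * Nat.centralBinom (n + 1) ^ 5)) := by
  calc wzMate n (1 / 2 : K)
      = (-1) ^ n * ((1 / 2 + (n : K)) ^ 2 + (1 / 2 + 2 * n + 1) ^ 2) /
          (2 * (2 * n + 1) * Nat.centralBinom n) *
          (4 ^ (n + 1) / ((n + 1) * Nat.centralBinom (n + 1))) ^ 4 := by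
        rw [wzMate, wzKernel, factorial_div_ascPochhammer_eval_half, ← mul_assoc, div_mul_div_comm,
          mul_comm (_ + _) ((-1) ^ n)]
    _ = (-1) ^ n * ((1 / 2 + (n : K)) ^ 2 + (1 / 2 + 2 * n + 1) ^ 2) /
          ((n + 1) * Nat.centralBinom (n + 1)) *
          (256 ^ (n + 1) / ((n + 1) * Nat.centralBinom (n + 1)) ^ 4) := by
        rw [cast_succ_mul_centralBinom_succ, div_pow, ← pow_mul, mul_comm (n + 1) 4, pow_mul]
        norm_num
    _ = _ := by
        field_simp
        ring

end WilfZeilbergerPair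

section Convergence

lemma abs_wzKernel_le (n : ℕ) {x : ℝ} (hx : 0 < x) :
    |wzKernel n x| ≤ 1 / (2 ^ n * x ^ 4) := by
  have hpoch : 0 < (ascPochhammer ℝ (n + 1)).eval x := ascPochhammer_pos _ _ hx
  have hbeta : (n ! : ℝ) / (ascPochhammer ℝ (n + 1)).eval x ≤ 1 / x := by
    rw [div_le_div_iff₀ hpoch hx, one_mul]
    exact factorial_mul_le_ascPochhammer_eval hx.le n
  have hC : (2 : ℝ) ^ n ≤ Nat.centralBinom n := by exact_mod_cast two_pow_le_centralBinom n
  calc |wzKernel n x|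
      = 1 / Nat.centralBinom n * (n ! / (ascPochhammer ℝ (n + 1)).eval x) ^ 4 := by
        rw [wzKernel, abs_mul, abs_div, abs_neg_one_pow, Nat.abs_cast,
          abs_of_nonneg (by positivity)]
    _ ≤ 1 / 2 ^ n * (1 / x) ^ 4 := by gcongr
    _ = 1 / (2 ^ n * x ^ 4) := by rw [div_pow, one_pow, one_div_mul_one_div]

lemma abs_wzSummand_le (n : ℕ) {x y : ℝ} (hx : 0 < x) (hxy : x ≤ y) :
    |wzSummand n y| ≤ (2 + n / x) * (1 / 2) ^ n * (1 / y ^ 3) := by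
  have hy : 0 < y := hx.trans_le hxy
  have hlin : 2 * y + n ≤ (2 + n / x) * y := by
    have : (n : ℝ) ≤ n / x * y := by
      rw [div_mul_eq_mul_div, le_div_iff₀ hx]
      gcongr
    linarith
  calc |wzSummand n y| = (2 * y + n) * |wzKernel n y| := by
        rw [wzSummand, abs_mul, abs_of_nonneg (by positivity)]
    _ ≤ (2 + n / x) * y * (1 / (2 ^ n * y ^ 4)) := by
        gcongr
        exact abs_wzKernel_le n hy
    _ = (2 + n / x) * (1 / 2) ^ n * (1 / y ^ 3) := by
        rw [div_pow, one_pow]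
        field_simp

lemma abs_wzMate_le (n : ℕ) {x : ℝ} (hx : 0 < x) :
    |wzMate n x| ≤ ((x + 2 * n + 1) / x ^ 2) ^ 2 := by
  have hfactor : ((x + n) ^ 2 + (x + 2 * n + 1) ^ 2) / (2 * (2 * n + 1)) ≤
      (x + 2 * n + 1) ^ 2 := by
    rw [div_le_iff₀ (by positivity)]
    have : (x + n) ^ 2 ≤ (x + 2 * n + 1) ^ 2 :=
      pow_le_pow_left₀ (by positivity) (by linarith [n.cast_nonneg (α := ℝ)]) 2
    have : 0 ≤ (x + 2 * n + 1) ^ 2 * n := by positivity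
    linarith
  have hkernel : |wzKernel n x| ≤ 1 / x ^ 4 := by
    refine (abs_wzKernel_le n hx).trans ?_
    gcongr
    exact le_mul_of_one_le_left (by positivity) (one_le_pow₀ one_le_two)
  calc |wzMate n x|
      = ((x + n) ^ 2 + (x + 2 * n + 1) ^ 2) / (2 * (2 * n + 1)) * |wzKernel n x| := by
        rw [wzMate, abs_mul, abs_of_nonneg (by positivity)]
    _ ≤ (x + 2 * n + 1) ^ 2 * (1 / x ^ 4) := by gcongr
    _ = ((x + 2 * n + 1) / x ^ 2) ^ 2 := by ring

lemma tendsto_wzMate_atTop (n : ℕ) : Tendsto (wzMate n : ℝ → ℝ) atTop (𝓝 0) := by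
  have hinv : Tendsto (fun x : ℝ => x⁻¹) atTop (𝓝 0) := tendsto_inv_atTop_zero
  have hlim : Tendsto (fun x : ℝ => (x⁻¹ + (2 * n + 1) * x⁻¹ ^ 2) ^ 2) atTop (𝓝 0) := by
    simpa using (hinv.add ((hinv.pow 2).const_mul (2 * (n : ℝ) + 1))).pow 2
  refine squeeze_zero_norm' ?_ hlim
  filter_upwards [eventually_gt_atTop 0] with x hx
  calc ‖wzMate n x‖ ≤ ((x + 2 * n + 1) / x ^ 2) ^ 2 := abs_wzMate_le n hx
    _ = (x⁻¹ + (2 * n + 1) * x⁻¹ ^ 2) ^ 2 := by field_simp; ring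

lemma summable_wzSummand {x : ℝ} (hx : 0 < x) :
    Summable (Function.uncurry fun n k : ℕ => wzSummand n (x + k)) := by
  have hgeom : Summable fun n : ℕ => (2 + n / x) * (1 / 2 : ℝ) ^ n := by
    have hr : ‖(1 / 2 : ℝ)‖ < 1 := by norm_num
    refine (((summable_geometric_of_norm_lt_one hr).mul_left 2).add
      ((summable_pow_mul_geometric_of_norm_lt_one 1 hr).mul_left x⁻¹)).congr fun n => ?_
    ring
  refine .of_norm_bounded (hgeom.mul_of_nonneg
    (summable_one_div_add_nat_pow hx.le (p := 3) (by norm_num)) ?_ ?_)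
    fun ⟨n, k⟩ => abs_wzSummand_le n hx (by simp)
  all_goals exact fun _ => by positivity

end Convergence

theorem hasSum_wzMate {x : ℝ} (hx : 0 < x) :
    HasSum (fun n => wzMate n x) (2 * ∑' k : ℕ, 1 / (x + k) ^ 3) := by
  have hWZ (n k : ℕ) : wzSummand n (x + k) - wzSummand (n + 1) (x + k) =
      wzMate n (x + k) - wzMate n (x + (k + 1 : ℕ)) := by
    rw [wzSummand_sub_wzSummand_succ n (by positivity) (by positivity), Nat.cast_succ, add_assoc]
  have hlim (n : ℕ) : Tendsto (fun k : ℕ => wzMate n (x + k)) atTop (𝓝 0) :=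
    (tendsto_wzMate_atTop n).comp (tendsto_atTop_add_const_left _ x tendsto_natCast_atTop_atTop)
  have hzero (k : ℕ) : wzSummand 0 (x + k) = 2 * (1 / (x + k) ^ 3) :=
    wzSummand_zero (by positivity)
  simpa only [hzero, tsum_mul_left, Nat.cast_zero, add_zero] using
    hasSum_of_wilfZeilberger hWZ (summable_wzSummand hx) hlim

theorem stmt13 :
    (∑' k : ℕ, 1 / ((k : ℝ) + 1) ^ 3)
      = (1 / 28) * ∑' n : ℕ,
          (-1 : ℝ) ^ n * (10 * ((n : ℝ) + 1) ^ 2 - 6 * ((n : ℝ) + 1) + 1) *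
            256 ^ (n + 1) /
            (((n : ℝ) + 1) ^ 5 * (Nat.choose (2 * (n + 1)) (n + 1) : ℝ) ^ 5) := by
  have hsum := (hasSum_wzMate (x := 1 / 2) (by norm_num)).tsum_eq
  simp only [wzMate_half, tsum_mul_left, Nat.centralBinom_eq_two_mul_choose] at hsum
  rw [tsum_one_div_half_add_nat_pow (by norm_num)] at hsum
  linear_combination (-1 / 14) * hsum
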